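/- Let g be a nonzero polynomial with rational coefficients in indeterminates T_1, T_3, T_5, …, where T_{2k−1} is assigned degree 2k−1, and let d be the maximal weighted degree of the monomials of g. Let n > d, and let f ∈ ℚ[x_1,…,x_n] be obtained from g by substituting T_{2k−1} ↦ p_{2k−1}(x_1,…,x_n) = x_1^{2k−1} + ⋯ + x_n^{2k−1}. Then f ≠ 0, and if x_1^{α_1} x_2^{α_2} ⋯ x_s^{α_s} (with α_s > 0) is the lexicographically largest monomial of f with respect to x_1 > x_2 > ⋯ > x_n, then α_1 > α_2 > ⋯ > α_s. -/

import Mathlib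

namespace PowerSumLex

open MvPolynomial

/-- The result of substituting the power sums `p_{2k-1}(x_1, …, x_n)` for the weighted
variables `T_{2k-1}` in the polynomial `g`. -/
noncomputable def psubst (n : ℕ) (g : MvPolynomial {k : ℕ // Odd k} ℚ) :
    MvPolynomial (Fin n) ℚ :=
  aeval (fun v : {k : ℕ // Odd k} =>
    ∑ i : Fin n, (X i : MvPolynomial (Fin n) ℚ) ^ (v : ℕ)) g

/-- Strict lexicographic comparison of monomials with respect to `x_1 > x_2 > ⋯ > x_n`:
the larger monomial has the larger exponent at the largest (smallest-index) variable on
which they differ. -/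
def MonLex {n : ℕ} (m m' : Fin n →₀ ℕ) : Prop :=
  ∃ i : Fin n, m i < m' i ∧ ∀ j : Fin n, j < i → m j = m' j

/-- Elementary symmetric polynomials lie in any rational subalgebra containing
the first power sums. -/
lemma esymm_mem_of_psum_mem (n : ℕ) (S : Subalgebra ℚ (MvPolynomial (Fin n) ℚ))
    (hS : ∀ k, 0 < k → k ≤ n → psum (Fin n) ℚ k ∈ S) :
    ∀ k, k ≤ n → esymm (Fin n) ℚ k ∈ S := by
  intro k
  induction k using Nat.strong_induction_on with
  | _ k ih =>
    intro hk
    rcases Nat.eq_zero_or_pos k with rfl | hpos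
    · simp
    have h := mul_esymm_eq_sum (Fin n) ℚ k
    have h2 : (k : MvPolynomial (Fin n) ℚ) * esymm (Fin n) ℚ k ∈ S := by
      rw [h]
      refine S.mul_mem (S.pow_mem (S.neg_mem S.one_mem) _) (S.sum_mem ?_)
      intro a ha
      rw [Finset.mem_filter] at ha
      have hsum : a.1 + a.2 = k := Finset.HasAntidiagonal.mem_antidiagonal.1 ha.1
      have hlt := ha.2
      exact S.mul_mem (S.mul_mem (S.pow_mem (S.neg_mem S.one_mem) _)
        (ih _ ha.2 (by omega))) (hS _ (by omega) (by omega))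
    have h3 : esymm (Fin n) ℚ k
        = (k : ℚ)⁻¹ • ((k : MvPolynomial (Fin n) ℚ) * esymm (Fin n) ℚ k) := by
      have : (k : MvPolynomial (Fin n) ℚ) = C (k : ℚ) := by simp
      rw [this, ← smul_eq_C_mul, smul_smul, inv_mul_cancel₀ (by positivity), one_smul]
    rw [h3]
    exact S.smul_mem h2 _

/-- The first `n` power sums in `n` variables are algebraically independent. -/
lemma algebraicIndependent_psum (n : ℕ) :
    AlgebraicIndependent ℚ (fun k : Fin n => psum (Fin n) ℚ (k + 1)) := by
  let x : Fin n → symmetricSubalgebra (Fin n) ℚ :=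
    fun k => ⟨psum (Fin n) ℚ (k + 1), psum_isSymmetric _ _ _⟩
  have htop : Algebra.adjoin ℚ (Set.range x) = ⊤ := by
    have hmap : ∀ k, k ≤ n → esymm (Fin n) ℚ k ∈
        (Algebra.adjoin ℚ (Set.range x)).map (symmetricSubalgebra (Fin n) ℚ).val := by
      refine esymm_mem_of_psum_mem n _ ?_
      intro k hk hkn
      refine ⟨x ⟨k - 1, by omega⟩, Algebra.subset_adjoin ⟨_, rfl⟩, ?_⟩
      simp only [x]
      change psum (Fin n) ℚ (k - 1 + 1) = _
      rw [Nat.sub_add_cancel hk]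
    rw [eq_top_iff]
    rintro p -
    obtain ⟨q, rfl⟩ := (esymmAlgHom_fin_bijective ℚ n).2 p
    have : esymmAlgHom (Fin n) ℚ n q ∈ (esymmAlgHom (Fin n) ℚ n).range := ⟨q, rfl⟩
    refine (?_ : (esymmAlgHom (Fin n) ℚ n).range ≤ _) this
    rw [esymmAlgHom, ← Algebra.adjoin_range_eq_range_aeval, Algebra.adjoin_le_iff]
    rintro _ ⟨k, rfl⟩
    obtain ⟨y, hy, hyk⟩ := hmap (k + 1) (by omega)
    have : y = ⟨esymm (Fin n) ℚ (k + 1), esymm_isSymmetric _ _ _⟩ := Subtype.ext hyk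
    rw [this] at hy
    exact hy
  have : Algebra.IsAlgebraic (Algebra.adjoin ℚ (Set.range x))
      (symmetricSubalgebra (Fin n) ℚ) := by
    constructor
    intro a
    have ha : a ∈ Algebra.adjoin ℚ (Set.range x) := by rw [htop]; trivial
    exact isAlgebraic_algebraMap (⟨a, ha⟩ : Algebra.adjoin ℚ (Set.range x))
  have : FaithfulSMul ℚ (symmetricSubalgebra (Fin n) ℚ) :=
    (faithfulSMul_iff_algebraMap_injective _ _).2 (algebraMap ℚ _).injective
  have hb : IsTranscendenceBasis ℚ x := by
    apply Algebra.IsAlgebraic.isTranscendenceBasis_of_le_trdeg_of_finite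
    rw [← (esymmAlgEquiv (Fin n) ℚ (Fintype.card_fin n)).trdeg_eq]
    simp
  exact hb.1.map' (f := (symmetricSubalgebra (Fin n) ℚ).val) Subtype.val_injective

lemma psubst_ne_zero (n : ℕ) (g : MvPolynomial {k : ℕ // Odd k} ℚ) (hg : g ≠ 0)
    (hn : g.support.sup (fun m => m.sum fun v e => (v : ℕ) * e) < n) :
    psubst n g ≠ 0 := by
  let ι := {v : {k : ℕ // Odd k} // (v : ℕ) ≤ n}
  have hvars : (g.vars : Set {k : ℕ // Odd k}) ⊆ Set.range (Subtype.val : ι → _) := by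
    intro v hv
    rw [Finset.mem_coe, mem_vars] at hv
    obtain ⟨m, hm, hvm⟩ := hv
    have h1 := Finset.le_sup (f := fun m : {k : ℕ // Odd k} →₀ ℕ =>
      m.sum fun v e => (v : ℕ) * e) hm
    have h2 : (v : ℕ) * m v ≤ m.sum fun v e => (v : ℕ) * e :=
      Finset.single_le_sum (f := fun v : {k : ℕ // Odd k} => (v : ℕ) * m v)
        (fun _ _ => Nat.zero_le _) hvm
    have h3 : (v : ℕ) ≤ v * m v :=
      Nat.le_mul_of_pos_right _ (Nat.pos_of_ne_zero (Finsupp.mem_support_iff.1 hvm))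
    exact ⟨⟨v, by omega⟩, rfl⟩
  obtain ⟨q, rfl⟩ := exists_rename_eq_of_vars_subset_range g _ Subtype.val_injective hvars
  have hq : q ≠ 0 := by
    rintro rfl
    simp at hg
  have hpos : ∀ v : ι, 0 < (v.1 : ℕ) := fun v => v.1.2.pos
  let e : ι → Fin n := fun v => ⟨(v.1 : ℕ) - 1, by have := hpos v; have := v.2; omega⟩
  have he : Function.Injective e := by
    intro v w h
    have h' : (v.1 : ℕ) - 1 = (w.1 : ℕ) - 1 := congrArg Fin.val h
    have := hpos v
    have := hpos w
    exact Subtype.ext (Subtype.ext (by omega))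
  have hind := (algebraicIndependent_psum n).comp e he
  intro h0
  apply hq
  apply (injective_iff_map_eq_zero _).1 hind
  rw [psubst, aeval_rename] at h0
  rw [← h0]
  congr 2
  funext v
  simp only [Function.comp, e, psum]
  rw [Nat.sub_add_cancel (hpos v)]

lemma psubst_isSymmetric (n : ℕ) (g : MvPolynomial {k : ℕ // Odd k} ℚ) :
    (psubst n g).IsSymmetric := by
  intro e
  rw [psubst, ← AlgHom.comp_apply, comp_aeval]
  congr 2
  funext v
  exact rename_psum (Fin n) ℚ (v : ℕ) e

/-- The substitution `x_i ↦ t`, `x_j ↦ -t`. -/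
noncomputable def cancelHom {n : ℕ} (i j : Fin n) :
    MvPolynomial (Fin n) ℚ →ₐ[ℚ] Polynomial (MvPolynomial (Fin n) ℚ) :=
  aeval (fun k => if k = i then Polynomial.X else if k = j then -Polynomial.X
    else Polynomial.C (X k))

lemma cancelHom_psubst {n : ℕ} {i j : Fin n} (hij : i ≠ j)
    (g : MvPolynomial {k : ℕ // Odd k} ℚ) :
    ∃ r, cancelHom i j (psubst n g) = Polynomial.C r := by
  refine ⟨aeval (fun v : {k : ℕ // Odd k} =>
    ∑ k : Fin n, if k = i then 0 else if k = j then 0 else X k ^ (v : ℕ)) g, ?_⟩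
  have hC : ∀ p : MvPolynomial (Fin n) ℚ, Polynomial.C p = Polynomial.CAlgHom (R := ℚ) p :=
    fun p => rfl
  rw [psubst, hC, ← AlgHom.comp_apply, ← AlgHom.comp_apply, comp_aeval, comp_aeval]
  congr 2
  funext v
  rw [map_sum, map_sum, ← sub_eq_zero, ← Finset.sum_sub_distrib]
  have : ∀ k : Fin n, cancelHom i j (X k ^ (v : ℕ)) -
      Polynomial.CAlgHom (R := ℚ)
        (if k = i then 0 else if k = j then 0 else X k ^ (v : ℕ) : MvPolynomial (Fin n) ℚ) =
      (if k = i then (Polynomial.X : Polynomial (MvPolynomial (Fin n) ℚ)) ^ (v : ℕ) else 0) +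
      (if k = j then -Polynomial.X ^ (v : ℕ) else 0) := by
    intro k
    by_cases h1 : k = i
    · subst h1
      simp [cancelHom, hij]
    · by_cases h2 : k = j
      · subst h2
        simp [cancelHom, h1, Odd.neg_pow v.2 (Polynomial.X : Polynomial (MvPolynomial (Fin n) ℚ))]
      · simp [cancelHom, h1, h2]
  simp only [this, Finset.sum_add_distrib]
  simp

lemma cancelHom_monomial {n : ℕ} {i j : Fin n} (hij : i ≠ j) (s : Fin n →₀ ℕ) (c : ℚ) :
    cancelHom i j (monomial s c) =
      Polynomial.C ((-1) ^ s j * monomial ((s.erase i).erase j) c) *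
        Polynomial.X ^ (s i + s j) := by
  have hs : s = (s.erase i).erase j + (Finsupp.single i (s i) + Finsupp.single j (s j)) := by
    ext k
    by_cases h1 : k = i
    · subst h1
      simp [hij, Finsupp.erase_ne, hij.symm]
    · by_cases h2 : k = j
      · subst h2
        simp [h1, Ne.symm h1]
      · simp [h1, h2, Finsupp.erase_ne, Ne.symm h1, Ne.symm h2]
  have hm : (monomial s c : MvPolynomial (Fin n) ℚ) =
      monomial ((s.erase i).erase j) c * (X i ^ s i * X j ^ s j) := by
    conv_lhs => rw [hs]
    rw [X_pow_eq_monomial, X_pow_eq_monomial, monomial_mul, monomial_mul]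
    simp
  have h0 : cancelHom i j (monomial ((s.erase i).erase j) c) =
      Polynomial.C (monomial ((s.erase i).erase j) c) := by
    rw [cancelHom, aeval_monomial, monomial_eq, map_mul, Finsupp.prod, Finsupp.prod, map_prod]
    congr 1
    refine Finset.prod_congr rfl ?_
    intro k hk
    simp only [Finsupp.support_erase, Finset.mem_erase] at hk
    simp [hk.1, hk.2.1]
  rw [hm, map_mul, h0, map_mul, map_pow, map_pow]
  have hi : cancelHom i j (X i) = Polynomial.X := by simp [cancelHom]
  have hj : cancelHom i j (X j) = -Polynomial.X := by simp [cancelHom, hij.symm]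
  rw [hi, hj, neg_pow]
  simp only [map_mul, map_pow, map_neg, map_one, pow_add]
  ring

lemma coeff_cancelHom_monomial {n : ℕ} {i j : Fin n} (hij : i ≠ j) (s : Fin n →₀ ℕ) (c : ℚ)
    (N : ℕ) (m : Fin n →₀ ℕ) :
    coeff m ((cancelHom i j (monomial s c)).coeff N) =
      if N = s i + s j ∧ (s.erase i).erase j = m then (-1) ^ s j * c else 0 := by
  rw [cancelHom_monomial hij, Polynomial.coeff_C_mul_X_pow]
  have h1 : ((-1) ^ s j * monomial ((s.erase i).erase j) c : MvPolynomial (Fin n) ℚ) =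
      monomial ((s.erase i).erase j) ((-1) ^ s j * c) := by
    rw [← C_mul_monomial]
    simp
  rw [h1]
  by_cases h : N = s i + s j
  · simp [h, coeff_monomial]
  · simp [h]

/-- The exponent vector with the entries at `i` and `j` exchanged. -/
lemma swap_mem_support {n : ℕ} {f : MvPolynomial (Fin n) ℚ} (hf : f.IsSymmetric)
    (i j : Fin n) {s : Fin n →₀ ℕ} (hs : s ∈ f.support) :
    s.mapDomain (Equiv.swap i j) ∈ f.support := by
  rw [mem_support_iff] at hs ⊢
  rw [← hf (Equiv.swap i j), coeff_rename_mapDomain _ (Equiv.injective _)]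
  exact hs

lemma swap_apply {n : ℕ} (i j : Fin n) (s : Fin n →₀ ℕ) (k : Fin n) :
    s.mapDomain (Equiv.swap i j) k = s (Equiv.swap i j k) := by
  conv_lhs => rw [← Equiv.swap_apply_self i j k]
  exact Finsupp.mapDomain_apply (Equiv.injective _) _ _

lemma not_mem_of_lt {n : ℕ} {f : MvPolynomial (Fin n) ℚ} {μ s : Fin n →₀ ℕ}
    (hμ : ∀ m ∈ f.support, m ≠ μ → MonLex m μ) (hs : s ∈ f.support) (i : Fin n)
    (hlt : μ i < s i) (heq : ∀ k < i, s k = μ k) : False := by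
  obtain ⟨l, hl, hl'⟩ := hμ s hs (by rintro rfl; omega)
  rcases lt_trichotomy l i with h | h | h
  · have := heq l h; omega
  · subst h; omega
  · have := hl' i h; omega

lemma strict_of_leading (n : ℕ) (g : MvPolynomial {k : ℕ // Odd k} ℚ) (μ : Fin n →₀ ℕ)
    (hmem : μ ∈ (psubst n g).support)
    (hμ : ∀ m ∈ (psubst n g).support, m ≠ μ → MonLex m μ)
    (i j : Fin n) (hij : i < j) (hj : μ j ≠ 0) : μ j < μ i := by
  have hsym := psubst_isSymmetric n g
  have hne : i ≠ j := hij.ne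
  have key : ∀ s ∈ (psubst n g).support, (∀ k, k ≠ i → k ≠ j → s k = μ k) → s j ≤ μ i := by
    intro s hs hk
    by_contra hlt
    refine not_mem_of_lt hμ (swap_mem_support hsym i j hs) i ?_ ?_
    · rw [swap_apply, Equiv.swap_apply_left]; omega
    · intro k hki
      rw [swap_apply, Equiv.swap_apply_of_ne_of_ne hki.ne (hki.trans hij).ne]
      exact hk k hki.ne (hki.trans hij).ne
  have hle := key μ hmem (fun _ _ _ => rfl)
  rcases hle.lt_or_eq with h | heq
  · exact h
  exfalso
  obtain ⟨r, hr⟩ := cancelHom_psubst hne g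
  have hz : coeff ((μ.erase i).erase j)
      ((cancelHom i j (psubst n g)).coeff (μ i + μ j)) = 0 := by
    rw [hr, Polynomial.coeff_C_of_ne_zero (by omega), coeff_zero]
  rw [(psubst n g).as_sum, map_sum, Polynomial.finsetSum_coeff, coeff_sum] at hz
  simp only [coeff_cancelHom_monomial hne] at hz
  rw [Finset.sum_eq_single μ] at hz
  · simp only [and_self, if_true] at hz
    rw [mem_support_iff] at hmem
    exact (mul_ne_zero (pow_ne_zero _ (by norm_num)) hmem) hz
  · intro s hs hsμ
    rw [if_neg]
    rintro ⟨h1, h2⟩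
    have hk : ∀ k, k ≠ i → k ≠ j → s k = μ k := by
      intro k hki hkj
      have := DFunLike.congr_fun h2 k
      simpa [Finsupp.erase_ne, hki, hkj] using this
    have h3 := key s hs hk
    have h4 : s i ≤ μ i := by
      by_contra hlt
      exact not_mem_of_lt hμ hs i (by omega)
        (fun k hki => hk k hki.ne (hki.trans hij).ne)
    apply hsμ
    ext k
    by_cases hki : k = i
    · subst hki; omega
    · by_cases hkj : k = j
      · subst hkj; omega
      · exact hk k hki hkj
  · intro h
    exact absurd hmem h

/-- Let `g ≠ 0` be a polynomial in `T_1, T_3, T_5, …` (with `T_{2k-1}` of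
weighted degree `2k-1`), `d` its maximal weighted degree, and `n > d`.  Then the polynomial
`f` obtained from `g` by substituting the odd power sums `p_{2k-1}(x_1, …, x_n)` is nonzero,
and the exponents of its lexicographically largest monomial are strictly decreasing. -/
theorem statement_15 (n : ℕ) (g : MvPolynomial {k : ℕ // Odd k} ℚ) (hg : g ≠ 0)
    (hn : g.support.sup (fun m => m.sum fun v e => (v : ℕ) * e) < n) :
    psubst n g ≠ 0 ∧
    ∀ μ : Fin n →₀ ℕ,
      (μ ∈ (psubst n g).support ∧ ∀ m ∈ (psubst n g).support, m ≠ μ → MonLex m μ) →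
      ∀ i j : Fin n, i < j → μ j ≠ 0 → μ j < μ i := by
  refine ⟨psubst_ne_zero n g hg hn, ?_⟩
  rintro μ ⟨h1, h2⟩ i j hij hj
  exact strict_of_leading n g μ h1 h2 i j hij hj

end PowerSumLex
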